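/- Let (h, h̃) be a pair of metrics on a nonempty open set U ⊆ ℝ^n and let E be a smooth vector field on U with L_E h = D·h and L_E h̃ = D̃·h̃ for smooth functions D, D̃; set λ = D̃ − D. Let ∘ be the multiplication on 1-forms associated to the pair (h, h̃). Then for all 1-forms u, v on U: L_E(∘)(u,v) = (1/2)·[h*(u, dλ)·v + h*(u,v)·dλ + h*(v, dD)·u − h̃*(v, dD̃)·h̃(h*u)] − D·(u∘v). -/

import Mathlib

open scoped BigOperators

noncomputable section

/-- Points of ℝⁿ. -/
abbrev Pt (n : ℕ) := Fin n → ℝ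
/-- Vector fields (globally defined functions; conditions are imposed on an open set). -/
abbrev VF (n : ℕ) := Pt n → Fin n → ℝ
/-- 1-forms. -/
abbrev OneForm (n : ℕ) := Pt n → Fin n → ℝ
/-- Metrics: smooth maps into symmetric invertible matrices. -/
abbrev Met (n : ℕ) := Pt n → Matrix (Fin n) (Fin n) ℝ
/-- (1,2)-tensor fields (multiplications on tangent vectors): components `c t k i j` = c^k_{ij}(t). -/
abbrev Mul2 (n : ℕ) := Pt n → Fin n → Fin n → Fin n → ℝ

variable {n : ℕ}

/-- Partial derivative ∂ᵢ f (t). -/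
def pder (i : Fin n) (f : Pt n → ℝ) (t : Pt n) : ℝ :=
  fderiv ℝ f t (Pi.single i 1)

/-- Smoothness (on `U`) of a vector field or a 1-form. -/
def SmoothVF (U : Set (Pt n)) (X : VF n) : Prop :=
  ∀ k, ContDiffOn ℝ (⊤ : ℕ∞) (fun t => X t k) U

def SmoothMet (U : Set (Pt n)) (g : Met n) : Prop :=
  ∀ i j, ContDiffOn ℝ (⊤ : ℕ∞) (fun t => g t i j) U

def SmoothMul2 (U : Set (Pt n)) (c : Mul2 n) : Prop :=
  ∀ k i j, ContDiffOn ℝ (⊤ : ℕ∞) (fun t => c t k i j) U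

/-- `g` is a (pseudo-Riemannian) metric on `U`: smooth, symmetric, invertible. -/
def IsMetricOn (U : Set (Pt n)) (g : Met n) : Prop :=
  SmoothMet U g ∧ ∀ t ∈ U, (g t).IsSymm ∧ IsUnit (g t)

/-- The 1-form g(X). -/
def mdown (g : Met n) (X : VF n) : OneForm n := fun t k => ∑ j, g t k j * X t j
/-- The vector field g*α. -/
def mup (g : Met n) (α : OneForm n) : VF n := fun t k => ∑ j, (g t)⁻¹ k j * α t j
/-- g*(α, β). -/
def mup2 (g : Met n) (α β : OneForm n) (t : Pt n) : ℝ :=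
  ∑ i, ∑ j, (g t)⁻¹ i j * α t i * β t j
/-- g(X, Y). -/
def mdown2 (g : Met n) (X Y : VF n) (t : Pt n) : ℝ :=
  ∑ i, ∑ j, g t i j * X t i * Y t j

/-- Christoffel symbols Γ(g)^k_{ij}(t). -/
def chr (g : Met n) (k i j : Fin n) (t : Pt n) : ℝ :=
  (1/2) * ∑ l, (g t)⁻¹ k l *
    (pder i (fun s => g s j l) t + pder j (fun s => g s i l) t - pder l (fun s => g s i j) t)

/-- Levi-Civita covariant derivative ∇^g_X Y of a vector field. -/
def covV (g : Met n) (X Y : VF n) : VF n :=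
  fun t k => ∑ i, X t i * (pder i (fun s => Y s k) t + ∑ m, chr g k i m t * Y t m)

/-- Levi-Civita covariant derivative ∇^g_X α of a 1-form. -/
def covF (g : Met n) (X : VF n) (α : OneForm n) : OneForm n :=
  fun t k => ∑ i, X t i * (pder i (fun s => α s k) t - ∑ m, chr g m i k t * α t m)

/-- Lie bracket [X, Y]. -/
def vbr (X Y : VF n) : VF n :=
  fun t k => ∑ i, (X t i * pder i (fun s => Y s k) t - Y t i * pder i (fun s => X s k) t)

/-- Curvature R(g)_{X,Y} Z = ∇_X ∇_Y Z − ∇_Y ∇_X Z − ∇_{[X,Y]} Z. -/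
def curvV (g : Met n) (X Y Z : VF n) : VF n :=
  fun t k => covV g X (covV g Y Z) t k - covV g Y (covV g X Z) t k
    - covV g (vbr X Y) Z t k

/-- Curvature acting on 1-forms: (R(g)_{X,Y} α)(Z) = −α(R(g)_{X,Y} Z). -/
def curvF (g : Met n) (X Y : VF n) (α : OneForm n) : OneForm n :=
  fun t k => - ∑ m, α t m * curvV g X Y (fun _ => Pi.single k 1) t m

/-- `g` is flat on `U`: the curvature tensor vanishes identically. -/
def FlatOn (U : Set (Pt n)) (g : Met n) : Prop :=
  ∀ X Y Z : VF n, SmoothVF U X → SmoothVF U Y → SmoothVF U Z →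
    ∀ t ∈ U, ∀ k, curvV g X Y Z t k = 0

/-- `g` has constant sectional curvature `s` on `U`. -/
def ConstSecCurv (U : Set (Pt n)) (g : Met n) (s : ℝ) : Prop :=
  ∀ X Y : VF n, SmoothVF U X → SmoothVF U Y → ∀ t ∈ U,
    mdown2 g (curvV g X Y Y) X t
      = s * (mdown2 g X X t * mdown2 g Y Y t - (mdown2 g X Y t) ^ 2)

/-- The metric g_λ of the pencil: its inverse matrix is g⁻¹ + λ g̃⁻¹. -/
def pencil (g g' : Met n) (lam : ℝ) : Met n :=
  fun t => ((g t)⁻¹ + lam • (g' t)⁻¹)⁻¹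

/-- Almost compatibility of the pair (g, g̃) on `U`. -/
def AlmostCompatible (U : Set (Pt n)) (g g' : Met n) : Prop :=
  ∀ lam : ℝ, (∀ t ∈ U, IsUnit ((g t)⁻¹ + lam • (g' t)⁻¹)) →
    ∀ X : VF n, SmoothVF U X → ∀ α : OneForm n, SmoothVF U α →
      ∀ t ∈ U, ∀ k,
        mup (pencil g g' lam) (covF (pencil g g' lam) X α) t k
          = mup g (covF g X α) t k + lam * mup g' (covF g' X α) t k

/-- Compatibility of the pair (g, g̃) on `U`. -/
def Compatible (U : Set (Pt n)) (g g' : Met n) : Prop :=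
  AlmostCompatible U g g' ∧
  ∀ lam : ℝ, (∀ t ∈ U, IsUnit ((g t)⁻¹ + lam • (g' t)⁻¹)) →
    ∀ X Y : VF n, SmoothVF U X → SmoothVF U Y →
      ∀ α : OneForm n, SmoothVF U α →
        ∀ t ∈ U, ∀ k,
          mup (pencil g g' lam) (curvF (pencil g g' lam) X Y α) t k
            = mup g (curvF g X Y α) t k + lam * mup g' (curvF g' X Y α) t k

/-- The multiplication α ∘ β = ∇^g_{g*α} β − ∇^{g̃}_{g*α} β on 1-forms. -/
def circM (g g' : Met n) (α β : OneForm n) : OneForm n :=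
  fun t k => covF g (mup g α) β t k - covF g' (mup g α) β t k

/-- The endomorphism T(u) = g(E) ∘ u of 1-forms, as a pointwise matrix
(`∘` being tensorial in its second argument). -/
def Tmat (g g' : Met n) (E : VF n) (t : Pt n) : Matrix (Fin n) (Fin n) ℝ :=
  Matrix.of fun k m => circM g g' (mdown g E) (fun _ => Pi.single m 1) t k

/-- The triple (g, g̃, E) is regular on `U` if T is invertible at every point. -/
def RegularTriple (U : Set (Pt n)) (g g' : Met n) (E : VF n) : Prop :=
  ∀ t ∈ U, IsUnit (Tmat g g' E t)

/-- T⁻¹(v). -/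
def TinvF (g g' : Met n) (E : VF n) (v : OneForm n) : OneForm n :=
  fun t k => ∑ m, (Tmat g g' E t)⁻¹ k m * v t m

/-- The multiplication u • v = u ∘ T⁻¹(v) on 1-forms. -/
def bulF (g g' : Met n) (E : VF n) (u v : OneForm n) : OneForm n :=
  circM g g' u (TinvF g g' E v)

/-- The multiplication • on vector fields: X • Y = g̃*((g̃X) • (g̃Y)). -/
def bulV (g g' : Met n) (E : VF n) (X Y : VF n) : VF n :=
  mup g' (bulF g g' E (mdown g' X) (mdown g' Y))

/-- The multiplication • associated to the regular triple (g, g̃, E), as a (1,2)-tensor. -/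
def bulMul (g g' : Met n) (E : VF n) : Mul2 n :=
  fun t k i j => bulV g g' E (fun _ => Pi.single i 1) (fun _ => Pi.single j 1) t k

/-- Applying a (1,2)-tensor to vector fields. -/
def mapp (c : Mul2 n) (X Y : VF n) : VF n :=
  fun t k => ∑ i, ∑ j, c t k i j * X t i * Y t j

/-- Transporting a multiplication on tangent vectors to a multiplication
on 1-forms via the metric: u • v := g̃((g̃*u) • (g̃*v)). -/
def formMul (g' : Met n) (c : Mul2 n) (u v : OneForm n) : OneForm n :=
  mdown g' (mapp c (mup g' u) (mup g' v))

/-- Lie derivative of a function. -/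
def lieFun (E : VF n) (φ : Pt n → ℝ) : Pt n → ℝ :=
  fun t => ∑ i, E t i * pder i φ t

/-- Lie derivative of a 1-form: (L_E α)(X) = E(α(X)) − α([E,X]). -/
def lieOne (E : VF n) (α : OneForm n) : OneForm n :=
  fun t k => (∑ i, E t i * pder i (fun s => α s k) t) + ∑ i, α t i * pder k (fun s => E s i) t

/-- Lie derivative of a metric: (L_E g)(X,Y) = E(g(X,Y)) − g([E,X],Y) − g(X,[E,Y]). -/
def lieMet (E : VF n) (g : Met n) : Met n := fun t =>
  Matrix.of fun k j =>
    (∑ i, E t i * pder i (fun s => g s k j) t)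
    + (∑ i, g t i j * pder k (fun s => E s i) t)
    + (∑ i, g t k i * pder j (fun s => E s i) t)

/-- Lie derivative of a multiplication ((1,2)-tensor):
(L_E c)(u,v) = L_E(c(u,v)) − c(L_E u, v) − c(u, L_E v), componentwise. -/
def lieMul (E : VF n) (c : Mul2 n) : Mul2 n :=
  fun t k i j =>
    vbr E (mapp c (fun _ => Pi.single i 1) (fun _ => Pi.single j 1)) t k
    - mapp c (vbr E (fun _ => Pi.single i 1)) (fun _ => Pi.single j 1) t k
    - mapp c (fun _ => Pi.single i 1) (vbr E (fun _ => Pi.single j 1)) t k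

/-- Lie derivative of a multiplication on 1-forms (applied to the pencil multiplication ∘). -/
def lieCirc (E : VF n) (g g' : Met n) (u v : OneForm n) : OneForm n :=
  fun t k => lieOne E (circM g g' u v) t k - circM g g' (lieOne E u) v t k
    - circM g g' u (lieOne E v) t k

/-- ∇^g_X(•)(Y,Z) := ∇^g_X(Y•Z) − (∇^g_X Y)•Z − Y•(∇^g_X Z), for a multiplication c. -/
def covMul (g : Met n) (c : Mul2 n) (X Y Z : VF n) : VF n :=
  fun t k => covV g X (mapp c Y Z) t k - mapp c (covV g X Y) Z t k
    - mapp c Y (covV g X Z) t k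

/-- The (4,0)-tensor ∇^g(•)(X,Y,Z,V) := g(∇^g_X(•)(Y,Z), V). -/
def covMul4 (g : Met n) (c : Mul2 n) (X Y Z V : VF n) (t : Pt n) : ℝ :=
  mdown2 g (covMul g c X Y Z) V t

/-- Total symmetry of the (4,0)-tensor ∇^g(•) (the F-manifold condition). -/
def TotSym (U : Set (Pt n)) (g : Met n) (c : Mul2 n) : Prop :=
  ∀ X Y Z V : VF n, SmoothVF U X → SmoothVF U Y → SmoothVF U Z → SmoothVF U V →
    ∀ t ∈ U,
      covMul4 g c X Y Z V t = covMul4 g c Y X Z V t ∧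
      covMul4 g c X Y Z V t = covMul4 g c X Z Y V t ∧
      covMul4 g c X Y Z V t = covMul4 g c X Y V Z t

/-- Weak F-manifold structure (U, •, g̃, E), with identity `e`, •-inverse `Einv` of E,
and rescaling functions `Dt` (for the metric) and `k` (for the multiplication). -/
structure IsWeakF (U : Set (Pt n)) (c : Mul2 n) (g' : Met n) (E e Einv : VF n)
    (Dt k : Pt n → ℝ) : Prop where
  met : IsMetricOn U g'
  smooth_c : SmoothMul2 U c
  smooth_E : SmoothVF U E
  smooth_e : SmoothVF U e
  smooth_Einv : SmoothVF U Einv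
  smooth_Dt : ContDiffOn ℝ (⊤ : ℕ∞) Dt U
  smooth_k : ContDiffOn ℝ (⊤ : ℕ∞) k U
  comm : ∀ t ∈ U, ∀ a i j, c t a i j = c t a j i
  assoc : ∀ t ∈ U, ∀ a x y z, (∑ m, c t a m z * c t m x y) = ∑ m, c t a x m * c t m y z
  unit : ∀ t ∈ U, ∀ a i, (∑ j, c t a j i * e t j) = if a = i then (1 : ℝ) else 0
  invar : ∀ t ∈ U, ∀ x y z, (∑ m, g' t m z * c t m x y) = ∑ m, g' t x m * c t m y z
  lie_g : ∀ t ∈ U, ∀ i j, lieMet E g' t i j = Dt t * g' t i j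
  lie_c : ∀ t ∈ U, ∀ a i j, lieMul E c t a i j = k t * c t a i j
  e_inv : ∀ t ∈ U, ∀ a, (∑ i, ∑ j, c t a i j * E t i * Einv t j) = e t a
  sym_E : ∀ Y Z V : VF n, SmoothVF U Y → SmoothVF U Z → SmoothVF U V → ∀ t ∈ U,
    covMul4 g' c E Y Z V t = covMul4 g' c Y E Z V t

/-- Weak quasi-homogeneous pencil (h, h̃) with Euler vector field E. -/
structure IsWQH (U : Set (Pt n)) (h h' : Met n) (E : VF n) (D Dt : Pt n → ℝ) : Prop where
  met_h : IsMetricOn U h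
  met_h' : IsMetricOn U h'
  compat : Compatible U h h'
  smooth_E : SmoothVF U E
  smooth_D : ContDiffOn ℝ (⊤ : ℕ∞) D U
  smooth_Dt : ContDiffOn ℝ (⊤ : ℕ∞) Dt U
  lie_h' : ∀ t ∈ U, ∀ i j, lieMet E h' t i j = Dt t * h' t i j
  cov_E : ∀ X : VF n, SmoothVF U X → ∀ t ∈ U, ∀ a, covV h X E t a = (D t / 2) * X t a
  diff_const : ∃ c₀ : ℝ, ∀ t ∈ U, Dt t - D t = c₀

/-- Frobenius manifold structure (U, •, g̃, E). -/
structure IsFrob (U : Set (Pt n)) (c : Mul2 n) (g' : Met n) (E e : VF n) (D k : ℝ) : Prop where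
  met : IsMetricOn U g'
  flat : FlatOn U g'
  smooth_c : SmoothMul2 U c
  smooth_E : SmoothVF U E
  smooth_e : SmoothVF U e
  comm : ∀ t ∈ U, ∀ a i j, c t a i j = c t a j i
  assoc : ∀ t ∈ U, ∀ a x y z, (∑ m, c t a m z * c t m x y) = ∑ m, c t a x m * c t m y z
  unit : ∀ t ∈ U, ∀ a i, (∑ j, c t a j i * e t j) = if a = i then (1 : ℝ) else 0
  invar : ∀ t ∈ U, ∀ x y z, (∑ m, g' t m z * c t m x y) = ∑ m, g' t x m * c t m y z
  e_par : ∀ X : VF n, SmoothVF U X → ∀ t ∈ U, ∀ a, covV g' X e t a = 0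
  tot_sym : TotSym U g' c
  nabla2E : ∀ X Y : VF n, SmoothVF U X → SmoothVF U Y → ∀ t ∈ U, ∀ a,
    covV g' X (covV g' Y E) t a - covV g' (covV g' X Y) E t a = 0
  lie_g : ∀ t ∈ U, ∀ i j, lieMet E g' t i j = D * g' t i j
  lie_c : ∀ t ∈ U, ∀ a i j, lieMul E c t a i j = k * c t a i j

/-- The intersection metric `g` of a Frobenius manifold: g*g̃ = E•, together with
its standard properties. -/
structure IsIntersection (U : Set (Pt n)) (c : Mul2 n) (g g' : Met n) (E : VF n)
    (d : ℝ) : Prop where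
  met : IsMetricOn U g
  defn : ∀ t ∈ U, ∀ a j, (∑ l, (g t)⁻¹ a l * g' t l j) = ∑ i, c t a i j * E t i
  lie_g : ∀ t ∈ U, ∀ i j, lieMet E g t i j = (1 - d) * g t i j
  compat : Compatible U g g'
  regular : RegularTriple U g g' E
  mul_eq : ∀ t ∈ U, ∀ a i j, bulMul g g' E t a i j = c t a i j

section PartialDerivatives

variable {U : Set (Pt n)} {t : Pt n} {f f₁ f₂ : Pt n → ℝ}

theorem pder_add (i : Fin n) (h₁ : DifferentiableAt ℝ f₁ t) (h₂ : DifferentiableAt ℝ f₂ t) :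
    pder i (fun s => f₁ s + f₂ s) t = pder i f₁ t + pder i f₂ t := by
  simp [pder, fderiv_fun_add h₁ h₂]

theorem pder_sub (i : Fin n) (h₁ : DifferentiableAt ℝ f₁ t) (h₂ : DifferentiableAt ℝ f₂ t) :
    pder i (fun s => f₁ s - f₂ s) t = pder i f₁ t - pder i f₂ t := by
  simp [pder, fderiv_fun_sub h₁ h₂]

theorem pder_mul (i : Fin n) (h₁ : DifferentiableAt ℝ f₁ t) (h₂ : DifferentiableAt ℝ f₂ t) :
    pder i (fun s => f₁ s * f₂ s) t = pder i f₁ t * f₂ t + f₁ t * pder i f₂ t := by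
  simp [pder, fderiv_fun_mul h₁ h₂]
  ring

theorem pder_sum {ι : Type*} (S : Finset ι) {F : ι → Pt n → ℝ} (i : Fin n)
    (hF : ∀ k ∈ S, DifferentiableAt ℝ (F k) t) :
    pder i (fun s => ∑ k ∈ S, F k s) t = ∑ k ∈ S, pder i (F k) t := by
  simp [pder, fderiv_fun_sum hF]

theorem pder_congr (hU : IsOpen U) (ht : t ∈ U) (hf : ∀ s ∈ U, f₁ s = f₂ s) (i : Fin n) :
    pder i f₁ t = pder i f₂ t := by
  have : f₁ =ᶠ[nhds t] f₂ := Filter.eventually_of_mem (hU.mem_nhds ht) hf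
  simp [pder, this.fderiv_eq]

theorem ContDiffOn.differentiableAt_of_isOpen (hU : IsOpen U) (hf : ContDiffOn ℝ (⊤ : ℕ∞) f U)
    (ht : t ∈ U) : DifferentiableAt ℝ f t :=
  (hf.contDiffAt (hU.mem_nhds ht)).differentiableAt (by simp)

theorem ContDiffOn.pder (hU : IsOpen U) (hf : ContDiffOn ℝ (⊤ : ℕ∞) f U) (i : Fin n) :
    ContDiffOn ℝ (⊤ : ℕ∞) (pder i f) U := by
  have h1 : ContDiffOn ℝ (⊤ : ℕ∞) (fderiv ℝ f) U := hf.fderiv_of_isOpen hU (by simp)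
  exact h1.clm_apply contDiffOn_const

theorem pder_comm (hU : IsOpen U) (hf : ContDiffOn ℝ (⊤ : ℕ∞) f U) (ht : t ∈ U) (i j : Fin n) :
    pder i (pder j f) t = pder j (pder i f) t := by
  have hd : DifferentiableAt ℝ (fderiv ℝ f) t :=
    ((hf.fderiv_of_isOpen hU (m := 1) (by norm_cast)).contDiffAt (hU.mem_nhds ht)).differentiableAt
      (by simp)
  have key : ∀ i j : Fin n, pder i (pder j f) t
      = fderiv ℝ (fderiv ℝ f) t (Pi.single i 1) (Pi.single j 1) := by
    intro i j
    change fderiv ℝ (fun s => fderiv ℝ f s (Pi.single j 1)) t _ = _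
    rw [fderiv_clm_apply hd (differentiableAt_const _)]
    simp
  rw [key, key]
  exact ((hf.contDiffAt (hU.mem_nhds ht)).isSymmSndFDerivAt (by
    simpa using WithTop.coe_le_coe.2 (le_top : (2 : ℕ∞) ≤ ⊤))).eq _ _

theorem lieFun_add {E : VF n} (h₁ : DifferentiableAt ℝ f₁ t) (h₂ : DifferentiableAt ℝ f₂ t) :
    lieFun E (fun s => f₁ s + f₂ s) t = lieFun E f₁ t + lieFun E f₂ t := by
  simp only [lieFun, pder_add _ h₁ h₂, mul_add, Finset.sum_add_distrib]

theorem lieFun_sub {E : VF n} (h₁ : DifferentiableAt ℝ f₁ t) (h₂ : DifferentiableAt ℝ f₂ t) :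
    lieFun E (fun s => f₁ s - f₂ s) t = lieFun E f₁ t - lieFun E f₂ t := by
  simp only [lieFun, pder_sub _ h₁ h₂, mul_sub, Finset.sum_sub_distrib]

theorem lieFun_mul {E : VF n} (h₁ : DifferentiableAt ℝ f₁ t) (h₂ : DifferentiableAt ℝ f₂ t) :
    lieFun E (fun s => f₁ s * f₂ s) t = lieFun E f₁ t * f₂ t + f₁ t * lieFun E f₂ t := by
  simp only [lieFun, pder_mul _ h₁ h₂, Finset.sum_mul, Finset.mul_sum, ← Finset.sum_add_distrib]
  exact Finset.sum_congr rfl fun _ _ => by ring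

theorem lieFun_sum {ι : Type*} (S : Finset ι) {F : ι → Pt n → ℝ} {E : VF n}
    (hF : ∀ k ∈ S, DifferentiableAt ℝ (F k) t) :
    lieFun E (fun s => ∑ k ∈ S, F k s) t = ∑ k ∈ S, lieFun E (F k) t := by
  simp only [lieFun, pder_sum S _ hF, Finset.mul_sum]
  exact Finset.sum_comm

theorem lieFun_congr {E : VF n} (hU : IsOpen U) (ht : t ∈ U) (hf : ∀ s ∈ U, f₁ s = f₂ s) :
    lieFun E f₁ t = lieFun E f₂ t := by
  simp only [lieFun, pder_congr hU ht hf]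

/-- Commutator of a partial derivative with the derivative along `E`. -/
theorem lieFun_pder {E : VF n} (hU : IsOpen U) (hE : SmoothVF U E)
    (hf : ContDiffOn ℝ (⊤ : ℕ∞) f U) (ht : t ∈ U) (c : Fin n) :
    lieFun E (pder c f) t
      = pder c (lieFun E f) t - ∑ p, pder c (fun s => E s p) t * pder p f t := by
  have hEd p := (hE p).differentiableAt_of_isOpen hU ht
  have hfd p := (hf.pder hU p).differentiableAt_of_isOpen hU ht
  unfold lieFun
  rw [pder_sum _ _ fun p _ => (hEd p).fun_mul (hfd p), ← Finset.sum_sub_distrib]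
  refine Finset.sum_congr rfl fun p _ => ?_
  rw [pder_mul _ (hEd p) (hfd p), pder_comm hU hf ht c p]
  ring

end PartialDerivatives

section Inverse

variable {U : Set (Pt n)} {t : Pt n} {g : Met n}

theorem IsMetricOn.inv_mul (hg : IsMetricOn U g) (ht : t ∈ U) : (g t)⁻¹ * g t = 1 :=
  Matrix.nonsing_inv_mul _ ((Matrix.isUnit_iff_isUnit_det _).1 (hg.2 t ht).2)

theorem IsMetricOn.mul_inv (hg : IsMetricOn U g) (ht : t ∈ U) : g t * (g t)⁻¹ = 1 :=
  Matrix.mul_nonsing_inv _ ((Matrix.isUnit_iff_isUnit_det _).1 (hg.2 t ht).2)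

theorem IsMetricOn.apply_comm (hg : IsMetricOn U g) (ht : t ∈ U) (i j : Fin n) :
    g t i j = g t j i := (hg.2 t ht).1.apply j i

theorem differentiableAt_det {A : Pt n → Matrix (Fin n) (Fin n) ℝ}
    (hA : ∀ i j, DifferentiableAt ℝ (fun s => A s i j) t) :
    DifferentiableAt ℝ (fun s => (A s).det) t := by
  simp only [Matrix.det_apply]
  refine DifferentiableAt.fun_sum fun σ _ => DifferentiableAt.const_smul ?_ _
  exact (HasFDerivAt.finsetProd fun i _ => (hA (σ i) i).hasFDerivAt).differentiableAt

theorem IsMetricOn.differentiableAt_inv (hU : IsOpen U) (hg : IsMetricOn U g) (ht : t ∈ U)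
    (i j : Fin n) : DifferentiableAt ℝ (fun s => (g s)⁻¹ i j) t := by
  have hgd k l := (hg.1 k l).differentiableAt_of_isOpen hU ht
  have hdet : (g t).det ≠ 0 := ((Matrix.isUnit_iff_isUnit_det _).1 (hg.2 t ht).2).ne_zero
  simp only [Matrix.inv_def, Matrix.smul_apply, Ring.inverse_eq_inv', smul_eq_mul,
    Matrix.adjugate_apply]
  refine ((differentiableAt_det hgd).inv hdet).fun_mul (differentiableAt_det fun k l => ?_)
  simp only [Matrix.updateRow_apply]
  split_ifs
  · exact differentiableAt_const _
  · exact hgd k l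

/-- A vector is determined by its image under a metric. -/
theorem IsMetricOn.eq_of_sum_eq (hg : IsMetricOn U g) (ht : t ∈ U) {x y : Fin n → ℝ}
    (hxy : ∀ a, ∑ k, g t a k * x k = ∑ k, g t a k * y k) (k : Fin n) : x k = y k := by
  have : (g t).mulVec x = (g t).mulVec y := funext hxy
  have := congrFun (congrArg (g t)⁻¹.mulVec this) k
  simpa [Matrix.mulVec_mulVec, hg.inv_mul ht] using this

theorem IsMetricOn.sum_mul_sum_inv (hg : IsMetricOn U g) (ht : t ∈ U) (x : Fin n → ℝ)
    (a : Fin n) : ∑ k, g t a k * ∑ l, (g t)⁻¹ k l * x l = x a := by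
  have : (g t).mulVec ((g t)⁻¹.mulVec x) = x := by
    rw [Matrix.mulVec_mulVec, hg.mul_inv ht, Matrix.one_mulVec]
  exact congrFun this a

end Inverse

section Conformal

variable {U : Set (Pt n)} {t : Pt n} {g : Met n} {E : VF n} {D : Pt n → ℝ}

/-- Christoffel symbols of the first kind. -/
def chrLow (g : Met n) (a i j : Fin n) (t : Pt n) : ℝ :=
  (1/2) * (pder i (fun s => g s j a) t + pder j (fun s => g s i a) t - pder a (fun s => g s i j) t)

theorem chr_eq_sum_inv (k i j : Fin n) :
    chr g k i j t = ∑ l, (g t)⁻¹ k l * chrLow g l i j t := by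
  simp only [chr, chrLow, Finset.mul_sum]
  exact Finset.sum_congr rfl fun _ _ => by ring

theorem IsMetricOn.sum_mul_chr (hg : IsMetricOn U g) (ht : t ∈ U) (a i j : Fin n) :
    ∑ k, g t a k * chr g k i j t = chrLow g a i j t := by
  simp only [chr_eq_sum_inv]
  exact hg.sum_mul_sum_inv ht (fun l => chrLow g l i j t) a

theorem IsMetricOn.differentiableAt_chrLow (hU : IsOpen U) (hg : IsMetricOn U g) (ht : t ∈ U)
    (a i j : Fin n) : DifferentiableAt ℝ (chrLow g a i j) t := by
  have hd i j c := ((hg.1 i j).pder hU c).differentiableAt_of_isOpen hU ht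
  exact (((hd j a i).fun_add (hd i a j)).fun_sub (hd i j a)).const_mul _

theorem IsMetricOn.differentiableAt_chr (hU : IsOpen U) (hg : IsMetricOn U g) (ht : t ∈ U)
    (k i j : Fin n) : DifferentiableAt ℝ (chr g k i j) t := by
  rw [show chr g k i j = fun s => ∑ l, (g s)⁻¹ k l * chrLow g l i j s from
    funext fun _ => chr_eq_sum_inv k i j]
  exact DifferentiableAt.fun_sum fun l _ =>
    (hg.differentiableAt_inv hU ht k l).fun_mul (hg.differentiableAt_chrLow hU ht l i j)

theorem IsMetricOn.differentiableAt_mup (hU : IsOpen U) (hg : IsMetricOn U g) (ht : t ∈ U)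
    {u : OneForm n} (hu : SmoothVF U u) (k : Fin n) :
    DifferentiableAt ℝ (fun s => mup g u s k) t :=
  DifferentiableAt.fun_sum fun l _ =>
    (hg.differentiableAt_inv hU ht k l).fun_mul ((hu l).differentiableAt_of_isOpen hU ht)

theorem lieFun_metric (hL : ∀ t ∈ U, ∀ i j, lieMet E g t i j = D t * g t i j) (ht : t ∈ U)
    (a b : Fin n) :
    lieFun E (fun s => g s a b) t = D t * g t a b
      - ∑ p, (g t p b * pder a (fun s => E s p) t + g t a p * pder b (fun s => E s p) t) := by
  have := hL t ht a b
  simp only [lieMet, Matrix.of_apply] at this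
  rw [Finset.sum_add_distrib, lieFun]
  linarith

theorem lieFun_pder_metric (hU : IsOpen U) (hg : IsMetricOn U g) (hE : SmoothVF U E)
    (hD : ContDiffOn ℝ (⊤ : ℕ∞) D U)
    (hL : ∀ t ∈ U, ∀ i j, lieMet E g t i j = D t * g t i j) (ht : t ∈ U) (c a b : Fin n) :
    lieFun E (pder c (fun s => g s a b)) t
      = pder c D t * g t a b + D t * pder c (fun s => g s a b) t
        - ∑ p, (pder c (fun s => g s p b) t * pder a (fun s => E s p) t
          + g t p b * pder c (pder a (fun s => E s p)) t
          + pder c (fun s => g s a p) t * pder b (fun s => E s p) t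
          + g t a p * pder c (pder b (fun s => E s p)) t
          + pder c (fun s => E s p) t * pder p (fun s => g s a b) t) := by
  have hDd := hD.differentiableAt_of_isOpen hU ht
  have hgd i j := (hg.1 i j).differentiableAt_of_isOpen hU ht
  have hEd p i := ((hE p).pder hU i).differentiableAt_of_isOpen hU ht
  rw [lieFun_pder hU hE (hg.1 a b) ht,
    pder_congr hU ht (fun s hs => lieFun_metric hL hs a b),
    pder_sub _ (hDd.fun_mul (hgd a b)) (DifferentiableAt.fun_sum fun p _ =>
      ((hgd p b).fun_mul (hEd p a)).fun_add ((hgd a p).fun_mul (hEd p b))),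
    pder_mul _ hDd (hgd a b), pder_sum _ _ fun p _ =>
      ((hgd p b).fun_mul (hEd p a)).fun_add ((hgd a p).fun_mul (hEd p b)),
    sub_sub, ← Finset.sum_add_distrib]
  refine congrArg₂ _ rfl (Finset.sum_congr rfl fun p _ => ?_)
  rw [pder_add _ ((hgd p b).fun_mul (hEd p a)) ((hgd a p).fun_mul (hEd p b)),
    pder_mul _ (hgd p b) (hEd p a), pder_mul _ (hgd a p) (hEd p b)]
  ring

theorem lieFun_chrLow (hU : IsOpen U) (hg : IsMetricOn U g) (hE : SmoothVF U E)
    (hD : ContDiffOn ℝ (⊤ : ℕ∞) D U)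
    (hL : ∀ t ∈ U, ∀ i j, lieMet E g t i j = D t * g t i j) (ht : t ∈ U) (a i j : Fin n) :
    lieFun E (chrLow g a i j) t
      = (1/2) * (pder i D t * g t j a + pder j D t * g t i a - pder a D t * g t i j)
        + D t * chrLow g a i j t
        - ∑ p, (pder i (fun s => E s p) t * chrLow g a p j t
          + pder j (fun s => E s p) t * chrLow g a i p t
          + pder a (fun s => E s p) t * chrLow g p i j t
          + g t a p * pder i (pder j (fun s => E s p)) t) := by
  have hd i j c := ((hg.1 i j).pder hU c).differentiableAt_of_isOpen hU ht
  have hsymm c k l : pder c (fun s => g s k l) t = pder c (fun s => g s l k) t :=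
    pder_congr hU ht (fun s hs => hg.apply_comm hs k l) c
  have key : lieFun E (chrLow g a i j) t = (1/2) * (lieFun E (pder i (fun s => g s j a)) t
      + lieFun E (pder j (fun s => g s i a)) t - lieFun E (pder a (fun s => g s i j)) t) := by
    rw [← lieFun_add (hd j a i) (hd i a j),
      ← lieFun_sub ((hd j a i).fun_add (hd i a j)) (hd i j a)]
    unfold chrLow
    rw [lieFun_mul (differentiableAt_const _) (((hd j a i).fun_add (hd i a j)).fun_sub (hd i j a))]
    simp [lieFun, pder]
  rw [key]
  simp only [lieFun_pder_metric hU hg hE hD hL ht]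
  rw [show ∀ A B C S₁ S₂ S₃ : ℝ, (1/2) * (A - S₁ + (B - S₂) - (C - S₃))
    = (1/2) * (A + B - C) - (1/2) * (S₁ + S₂ - S₃) from fun _ _ _ _ _ _ => by ring,
    ← Finset.sum_add_distrib, ← Finset.sum_sub_distrib, Finset.mul_sum]
  refine congrArg₂ _ (by unfold chrLow; ring) (Finset.sum_congr rfl fun p _ => ?_)
  rw [pder_comm hU (hE p) ht j i, pder_comm hU (hE p) ht a i, pder_comm hU (hE p) ht a j,
    hg.apply_comm ht p a, hg.apply_comm ht p j]
  simp only [chrLow]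
  rw [hsymm i p a]
  ring

/-- The Lie derivative of the Christoffel symbols along a conformal vector field. -/
theorem lieFun_chr (hU : IsOpen U) (hg : IsMetricOn U g) (hE : SmoothVF U E)
    (hD : ContDiffOn ℝ (⊤ : ℕ∞) D U)
    (hL : ∀ t ∈ U, ∀ i j, lieMet E g t i j = D t * g t i j) (ht : t ∈ U) (k i j : Fin n) :
    lieFun E (chr g k i j) t
      = (1/2) * (pder i D t * (1 : Matrix (Fin n) (Fin n) ℝ) k j
          + pder j D t * (1 : Matrix (Fin n) (Fin n) ℝ) k i
          - (∑ l, (g t)⁻¹ k l * pder l D t) * g t i j)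
        + ∑ p, (pder p (fun s => E s k) t * chr g p i j t
          - pder i (fun s => E s p) t * chr g k p j t
          - pder j (fun s => E s p) t * chr g k i p t)
        - pder i (pder j (fun s => E s k)) t := by
  revert k
  refine hg.eq_of_sum_eq ht fun a => ?_
  have hgd i j := (hg.1 i j).differentiableAt_of_isOpen hU ht
  have hcd k := hg.differentiableAt_chr hU ht k i j
  have h1 : ∑ k, (lieFun E (fun s => g s a k) t * chr g k i j t
      + g t a k * lieFun E (chr g k i j) t) = lieFun E (chrLow g a i j) t := by
    rw [← lieFun_congr hU ht fun s hs => hg.sum_mul_chr hs a i j,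
      lieFun_sum _ fun k _ => (hgd a k).fun_mul (hcd k)]
    exact Finset.sum_congr rfl fun k _ => (lieFun_mul (hgd a k) (hcd k)).symm
  rw [lieFun_chrLow hU hg hE hD hL ht] at h1
  simp only [lieFun_metric hL ht] at h1
  have hone (b : Fin n) : ∑ k, g t a k * (1 : Matrix (Fin n) (Fin n) ℝ) k b = g t a b := by
    simp [Matrix.one_apply]
  have hinv := hg.sum_mul_sum_inv ht (fun l => pder l D t) a
  have hlow i j := hg.sum_mul_chr ht a i j
  have hE1 : ∑ k, ∑ p, g t p k * pder a (fun s => E s p) t * chr g k i j t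
      = ∑ p, pder a (fun s => E s p) t * chrLow g p i j t := by
    rw [Finset.sum_comm]
    refine Finset.sum_congr rfl fun p _ => ?_
    rw [← hg.sum_mul_chr ht p i j, Finset.mul_sum]
    exact Finset.sum_congr rfl fun _ _ => by ring
  have hE2 : ∑ k, ∑ p, g t a k * (pder p (fun s => E s k) t * chr g p i j t)
      = ∑ k, ∑ p, g t a p * pder k (fun s => E s p) t * chr g k i j t := by
    rw [Finset.sum_comm]
    exact Finset.sum_congr rfl fun _ _ => Finset.sum_congr rfl fun _ _ => by ring
  have hE3 : ∑ k, ∑ p, g t a k * (pder i (fun s => E s p) t * chr g k p j t)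
      = ∑ p, pder i (fun s => E s p) t * chrLow g a p j t := by
    rw [Finset.sum_comm]
    refine Finset.sum_congr rfl fun p _ => ?_
    rw [← hlow, Finset.mul_sum]
    exact Finset.sum_congr rfl fun _ _ => by ring
  have hE4 : ∑ k, ∑ p, g t a k * (pder j (fun s => E s p) t * chr g k i p t)
      = ∑ p, pder j (fun s => E s p) t * chrLow g a i p t := by
    rw [Finset.sum_comm]
    refine Finset.sum_congr rfl fun p _ => ?_
    rw [← hlow, Finset.mul_sum]
    exact Finset.sum_congr rfl fun _ _ => by ring
  have hE5 : ∑ k, D t * g t a k * chr g k i j t = D t * chrLow g a i j t := by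
    rw [← hlow, Finset.mul_sum]
    exact Finset.sum_congr rfl fun _ _ => by ring
  obtain ⟨K, hK⟩ : ∃ K : Fin n → ℝ, ∀ k, ∑ l, (g t)⁻¹ k l * pder l D t = K k :=
    ⟨_, fun _ => rfl⟩
  simp only [hK] at hinv ⊢
  have hR : ∑ k, g t a k * ((1/2) * (pder i D t * (1 : Matrix (Fin n) (Fin n) ℝ) k j
          + pder j D t * (1 : Matrix (Fin n) (Fin n) ℝ) k i - K k * g t i j))
      = (1/2) * (pder i D t * g t j a + pder j D t * g t i a - pder a D t * g t i j) := by
    rw [hg.apply_comm ht j a, hg.apply_comm ht i a, ← hone i, ← hone j, ← hinv]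
    simp only [Finset.mul_sum, Finset.sum_mul, ← Finset.sum_add_distrib,
      ← Finset.sum_sub_distrib]
    exact Finset.sum_congr rfl fun _ _ => by ring
  simp only [mul_add (g t a _), mul_sub (g t a _), Finset.sum_add_distrib, Finset.sum_sub_distrib,
    Finset.mul_sum, sub_mul, add_mul, Finset.sum_mul] at h1 hR ⊢
  linarith

theorem lieFun_mup (hU : IsOpen U) (hg : IsMetricOn U g)
    (hL : ∀ t ∈ U, ∀ i j, lieMet E g t i j = D t * g t i j) (ht : t ∈ U) {u : OneForm n}
    (hu : SmoothVF U u) (k : Fin n) :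
    lieFun E (fun s => mup g u s k) t
      = mup g (lieOne E u) t k - D t * mup g u t k
        + ∑ p, mup g u t p * pder p (fun s => E s k) t := by
  revert k
  refine hg.eq_of_sum_eq ht fun a => ?_
  have hgd i j := (hg.1 i j).differentiableAt_of_isOpen hU ht
  have hmd k := hg.differentiableAt_mup hU ht hu k
  have h1 : ∑ k, (lieFun E (fun s => g s a k) t * mup g u t k
      + g t a k * lieFun E (fun s => mup g u s k) t) = lieFun E (fun s => u s a) t := by
    rw [← lieFun_congr hU ht fun s hs => hg.sum_mul_sum_inv hs (u s) a]
    change _ = lieFun E (fun s => ∑ k, g s a k * mup g u s k) t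
    rw [lieFun_sum _ fun k _ => (hgd a k).fun_mul (hmd k)]
    exact Finset.sum_congr rfl fun k _ => (lieFun_mul (hgd a k) (hmd k)).symm
  have hlow (w : OneForm n) b : ∑ k, g t b k * mup g w t k = w t b :=
    hg.sum_mul_sum_inv ht (w t) b
  have hlie : ∑ k, g t a k * mup g (lieOne E u) t k
      = lieFun E (fun s => u s a) t + ∑ p, u t p * pder a (fun s => E s p) t := hlow _ a
  simp only [lieFun_metric hL ht] at h1
  have hE1 : ∑ k, ∑ p, g t p k * pder a (fun s => E s p) t * mup g u t k
      = ∑ p, u t p * pder a (fun s => E s p) t := by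
    rw [Finset.sum_comm]
    refine Finset.sum_congr rfl fun p _ => ?_
    rw [← hlow u p, Finset.sum_mul]
    exact Finset.sum_congr rfl fun _ _ => by ring
  have hE2 : ∑ k, ∑ p, g t a k * (mup g u t p * pder p (fun s => E s k) t)
      = ∑ k, ∑ p, g t a p * pder k (fun s => E s p) t * mup g u t k := by
    rw [Finset.sum_comm]
    exact Finset.sum_congr rfl fun _ _ => Finset.sum_congr rfl fun _ _ => by ring
  have hE3 : ∑ k, g t a k * (D t * mup g u t k) = ∑ k, D t * g t a k * mup g u t k :=
    Finset.sum_congr rfl fun _ _ => by ring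
  simp only [mul_add (g t a _), mul_sub (g t a _), Finset.sum_add_distrib, Finset.sum_sub_distrib,
    Finset.mul_sum, sub_mul, add_mul, Finset.sum_mul] at h1 ⊢
  linarith

end Conformal

section Multiplication

variable {U : Set (Pt n)} {t : Pt n} {g g' : Met n} {E : VF n} {D D' : Pt n → ℝ}

/-- The difference tensor of the Levi-Civita connections of `g'` and `g`. -/
def chrDiff (g g' : Met n) (m i k : Fin n) (t : Pt n) : ℝ := chr g' m i k t - chr g m i k t

theorem circM_eq_sum (u v : OneForm n) (k : Fin n) :
    circM g g' u v t k = ∑ i, ∑ m, mup g u t i * chrDiff g g' m i k t * v t m := by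
  simp only [circM, covF, chrDiff, ← Finset.sum_sub_distrib]
  refine Finset.sum_congr rfl fun i _ => ?_
  rw [← mul_sub, sub_sub_sub_cancel_left, ← Finset.sum_sub_distrib, Finset.mul_sum]
  exact Finset.sum_congr rfl fun _ _ => by ring

theorem lieFun_chrDiff (hU : IsOpen U) (hg : IsMetricOn U g) (hg' : IsMetricOn U g')
    (hE : SmoothVF U E) (hD : ContDiffOn ℝ (⊤ : ℕ∞) D U) (hD' : ContDiffOn ℝ (⊤ : ℕ∞) D' U)
    (hL : ∀ t ∈ U, ∀ i j, lieMet E g t i j = D t * g t i j)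
    (hL' : ∀ t ∈ U, ∀ i j, lieMet E g' t i j = D' t * g' t i j) (ht : t ∈ U) (m i k : Fin n) :
    lieFun E (chrDiff g g' m i k) t
      = (1/2) * (pder i (fun x => D' x - D x) t * (1 : Matrix (Fin n) (Fin n) ℝ) m k
          + pder k (fun x => D' x - D x) t * (1 : Matrix (Fin n) (Fin n) ℝ) m i
          + mup g (fun s l => pder l D s) t m * g t i k
          - mup g' (fun s l => pder l D' s) t m * g' t i k)
        + ∑ p, (pder p (fun s => E s m) t * chrDiff g g' p i k t
          - pder i (fun s => E s p) t * chrDiff g g' m p k t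
          - pder k (fun s => E s p) t * chrDiff g g' m i p t) := by
  have hDd := hD.differentiableAt_of_isOpen hU ht
  have hDd' := hD'.differentiableAt_of_isOpen hU ht
  unfold chrDiff
  rw [lieFun_sub (hg'.differentiableAt_chr hU ht m i k) (hg.differentiableAt_chr hU ht m i k),
    lieFun_chr hU hg hE hD hL ht, lieFun_chr hU hg' hE hD' hL' ht, pder_sub _ hDd' hDd,
    pder_sub _ hDd' hDd]
  simp only [mup, mul_sub, Finset.sum_sub_distrib]
  ring

theorem lieFun_circM (hU : IsOpen U) (hg : IsMetricOn U g) (hg' : IsMetricOn U g')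
    {u v : OneForm n} (hu : SmoothVF U u) (hv : SmoothVF U v) (ht : t ∈ U) (k : Fin n) :
    lieFun E (fun s => circM g g' u v s k) t
      = ∑ i, ∑ m, (lieFun E (fun s => mup g u s i) t * chrDiff g g' m i k t * v t m
          + mup g u t i * lieFun E (chrDiff g g' m i k) t * v t m
          + mup g u t i * chrDiff g g' m i k t * lieFun E (fun s => v s m) t) := by
  have hX i := hg.differentiableAt_mup hU ht hu i
  have hA m i : DifferentiableAt ℝ (chrDiff g g' m i k) t :=
    (hg'.differentiableAt_chr hU ht m i k).fun_sub (hg.differentiableAt_chr hU ht m i k)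
  have hvd m := (hv m).differentiableAt_of_isOpen hU ht
  simp only [circM_eq_sum]
  rw [lieFun_sum _ fun i _ => DifferentiableAt.fun_sum fun m _ =>
    ((hX i).fun_mul (hA m i)).fun_mul (hvd m)]
  refine Finset.sum_congr rfl fun i _ => ?_
  rw [lieFun_sum _ fun m _ => ((hX i).fun_mul (hA m i)).fun_mul (hvd m)]
  refine Finset.sum_congr rfl fun m _ => ?_
  rw [lieFun_mul ((hX i).fun_mul (hA m i)) (hvd m), lieFun_mul (hX i) (hA m i)]
  ring

theorem lieOne_apply (α : OneForm n) (k : Fin n) :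
    lieOne E α t k = lieFun E (fun s => α s k) t + ∑ i, α t i * pder k (fun s => E s i) t := rfl

/-- Contracting the non-tensorial terms of the Lie derivatives with all indices cancels. -/
theorem sum_lie_contraction (X v : Fin n → ℝ) (A : Fin n → Fin n → Fin n → ℝ)
    (e : Fin n → Fin n → ℝ) (k : Fin n) :
    (∑ i, ∑ m, (∑ p, X p * e p i) * A m i k * v m)
      + (∑ i, ∑ m, X i * (∑ p, (e p m * A p i k - e i p * A m p k - e k p * A m i p)) * v m)
      - (∑ i, ∑ m, X i * A m i k * ∑ p, v p * e m p)
      + (∑ p, (∑ i, ∑ m, X i * A m i p * v m) * e k p) = 0 := by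
  have h1 : ∑ i, ∑ m, (∑ p, X p * e p i) * A m i k * v m
      = ∑ i, ∑ m, ∑ p, X i * (e i p * A m p k) * v m := by
    simp only [Finset.sum_mul]
    calc _ = ∑ m, ∑ i, ∑ p, X p * e p i * A m i k * v m := Finset.sum_comm
      _ = ∑ m, ∑ p, ∑ i, X p * e p i * A m i k * v m :=
        Finset.sum_congr rfl fun _ _ => Finset.sum_comm
      _ = ∑ p, ∑ m, ∑ i, X p * e p i * A m i k * v m := Finset.sum_comm
      _ = _ := Finset.sum_congr rfl fun _ _ => Finset.sum_congr rfl fun _ _ =>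
        Finset.sum_congr rfl fun _ _ => by ring
  have h2 : ∑ i, ∑ m, X i * A m i k * ∑ p, v p * e m p
      = ∑ i, ∑ m, ∑ p, X i * (e p m * A p i k) * v m := by
    simp only [Finset.mul_sum]
    refine Finset.sum_congr rfl fun _ _ => ?_
    rw [Finset.sum_comm]
    exact Finset.sum_congr rfl fun _ _ => Finset.sum_congr rfl fun _ _ => by ring
  have h3 : ∑ p, (∑ i, ∑ m, X i * A m i p * v m) * e k p
      = ∑ i, ∑ m, ∑ p, X i * (e k p * A m i p) * v m := by
    simp only [Finset.sum_mul]
    rw [Finset.sum_comm]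
    refine Finset.sum_congr rfl fun _ _ => ?_
    rw [Finset.sum_comm]
    exact Finset.sum_congr rfl fun _ _ => Finset.sum_congr rfl fun _ _ => by ring
  rw [h1, h2, h3]
  simp only [Finset.sum_sub_distrib, Finset.mul_sum, Finset.sum_mul, mul_sub, sub_mul]
  ring

theorem sum_contraction_expand (d : ℝ) (X Y P v w Q : Fin n → ℝ)
    (A T S : Fin n → Fin n → ℝ) :
    ∑ i, ∑ m, ((Y i - d * X i + P i) * A m i * v m + X i * (T m i + S m i) * v m
        + X i * A m i * (w m - Q m))
      = (∑ i, ∑ m, Y i * A m i * v m) - d * (∑ i, ∑ m, X i * A m i * v m)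
        + (∑ i, ∑ m, P i * A m i * v m) + (∑ i, ∑ m, X i * T m i * v m)
        + (∑ i, ∑ m, X i * S m i * v m) + (∑ i, ∑ m, X i * A m i * w m)
        - ∑ i, ∑ m, X i * A m i * Q m := by
  simp only [Finset.mul_sum, ← Finset.sum_add_distrib, ← Finset.sum_sub_distrib]
  exact Finset.sum_congr rfl fun _ _ => Finset.sum_congr rfl fun _ _ => by ring

theorem sum_mup_eq_mup2 (g : Met n) (α β : OneForm n) :
    ∑ m, α t m * mup g β t m = mup2 g α β t := by
  simp only [mup, mup2, Finset.mul_sum]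
  exact Finset.sum_congr rfl fun _ _ => Finset.sum_congr rfl fun _ _ => by ring

theorem IsMetricOn.mup2_comm (hg : IsMetricOn U g) (ht : t ∈ U) (α β : OneForm n) :
    mup2 g α β t = mup2 g β α t := by
  have hs i j : (g t)⁻¹ i j = (g t)⁻¹ j i := (Matrix.IsSymm.inv (hg.2 t ht).1).apply j i
  unfold mup2
  rw [Finset.sum_comm]
  refine Finset.sum_congr rfl fun i _ => Finset.sum_congr rfl fun j _ => ?_
  rw [hs j i]
  ring

theorem lieCirc_eq_contraction (hU : IsOpen U) (hg : IsMetricOn U g) (hg' : IsMetricOn U g')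
    (hE : SmoothVF U E) (hD : ContDiffOn ℝ (⊤ : ℕ∞) D U) (hD' : ContDiffOn ℝ (⊤ : ℕ∞) D' U)
    (hL : ∀ t ∈ U, ∀ i j, lieMet E g t i j = D t * g t i j)
    (hL' : ∀ t ∈ U, ∀ i j, lieMet E g' t i j = D' t * g' t i j) {u v : OneForm n}
    (hu : SmoothVF U u) (hv : SmoothVF U v) (ht : t ∈ U) (k : Fin n) :
    lieCirc E g g' u v t k
      = (∑ i, ∑ m, mup g u t i
          * ((1/2) * (pder i (fun x => D' x - D x) t * (1 : Matrix (Fin n) (Fin n) ℝ) m k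
            + pder k (fun x => D' x - D x) t * (1 : Matrix (Fin n) (Fin n) ℝ) m i
            + mup g (fun s l => pder l D s) t m * g t i k
            - mup g' (fun s l => pder l D' s) t m * g' t i k)) * v t m)
        - D t * circM g g' u v t k := by
  have hvm m : lieFun E (fun s => v s m) t
      = lieOne E v t m - ∑ p, v t p * pder m (fun s => E s p) t := by
    rw [lieOne_apply, add_sub_cancel_right]
  simp only [lieCirc]
  rw [lieOne_apply, lieFun_circM hU hg hg' hu hv ht]
  simp only [lieFun_mup hU hg hL ht hu, lieFun_chrDiff hU hg hg' hE hD hD' hL hL' ht, hvm,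
    circM_eq_sum]
  rw [sum_contraction_expand]
  linarith [sum_lie_contraction (mup g u t) (v t) (fun m i k => chrDiff g g' m i k t)
    (fun p q => pder p (fun s => E s q) t) k]

end Multiplication

/-- If L_E h = D h and L_E h̃ = D̃ h̃, then with λ = D̃ − D,
L_E(∘)(u,v) = ½[h*(u,dλ) v + h*(u,v) dλ + h*(v,dD) u − h̃*(v,dD̃) h̃(h*u)] − D (u∘v). -/
theorem stmt19 {n : ℕ} (U : Set (Pt n)) (hUopen : IsOpen U) (hUne : U.Nonempty)
    (h h' : Met n) (hmet : IsMetricOn U h) (hmet' : IsMetricOn U h')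
    (E : VF n) (hE : SmoothVF U E)
    (D Dt : Pt n → ℝ) (hD : ContDiffOn ℝ (⊤ : ℕ∞) D U) (hDt : ContDiffOn ℝ (⊤ : ℕ∞) Dt U)
    (hlieh : ∀ t ∈ U, ∀ i j, lieMet E h t i j = D t * h t i j)
    (hlieh' : ∀ t ∈ U, ∀ i j, lieMet E h' t i j = Dt t * h' t i j) :
    ∀ u v : OneForm n, SmoothVF U u → SmoothVF U v → ∀ t ∈ U, ∀ a,
      lieCirc E h h' u v t a
        = (1/2) * (mup2 h u (fun s i => pder i (fun x => Dt x - D x) s) t * v t a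
            + mup2 h u v t * pder a (fun x => Dt x - D x) t
            + mup2 h v (fun s i => pder i D s) t * u t a
            - mup2 h' v (fun s i => pder i Dt s) t * mdown h' (mup h u) t a)
          - D t * circM h h' u v t a := by
  intro u v hu hv t ht a
  rw [lieCirc_eq_contraction hUopen hmet hmet' hE hD hDt hlieh hlieh' hu hv ht]
  congr 1
  have hsum (x : Fin n → ℝ) (b : Fin n) :
      ∑ m, (1 : Matrix (Fin n) (Fin n) ℝ) m b * x m = x b := by simp [Matrix.one_apply]
  have hrow (g : Met n) (hg : IsMetricOn U g) :
      ∑ i, mup h u t i * g t i a = mdown g (mup h u) t a :=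
    Finset.sum_congr rfl fun i _ => by rw [hg.apply_comm ht, mul_comm]
  have hu' : mdown h (mup h u) t a = u t a := hmet.sum_mul_sum_inv ht (u t) a
  have hvu : ∑ i, mup h u t i * v t i = mup2 h u v t := by
    rw [hmet.mup2_comm ht, ← sum_mup_eq_mup2]
    exact Finset.sum_congr rfl fun _ _ => mul_comm _ _
  have hlam : ∑ i, mup h u t i * pder i (fun x => Dt x - D x) t
      = mup2 h u (fun s i => pder i (fun x => Dt x - D x) s) t := by
    rw [hmet.mup2_comm ht, ← sum_mup_eq_mup2]
    exact Finset.sum_congr rfl fun _ _ => mul_comm _ _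
  rw [← hlam, ← hvu, ← sum_mup_eq_mup2 h v, ← sum_mup_eq_mup2 h' v, ← hrow h' hmet', ← hu',
    ← hrow h hmet]
  have hi (i : Fin n) : ∑ m, mup h u t i
      * ((1/2) * (pder i (fun x => Dt x - D x) t * (1 : Matrix (Fin n) (Fin n) ℝ) m a
        + pder a (fun x => Dt x - D x) t * (1 : Matrix (Fin n) (Fin n) ℝ) m i
        + mup h (fun s l => pder l D s) t m * h t i a
        - mup h' (fun s l => pder l Dt s) t m * h' t i a)) * v t m
      = (1/2) * (mup h u t i * pder i (fun x => Dt x - D x) t * v t a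
        + mup h u t i * v t i * pder a (fun x => Dt x - D x) t
        + (∑ m, v t m * mup h (fun s l => pder l D s) t m) * (mup h u t i * h t i a)
        - (∑ m, v t m * mup h' (fun s l => pder l Dt s) t m) * (mup h u t i * h' t i a)) := by
    rw [← hsum (v t) a, ← hsum (v t) i]
    simp only [Finset.mul_sum, Finset.sum_mul, ← Finset.sum_add_distrib,
      ← Finset.sum_sub_distrib]
    exact Finset.sum_congr rfl fun _ _ => by ring
  rw [Finset.sum_congr rfl fun i _ => hi i, ← Finset.mul_sum]
  simp only [Finset.sum_add_distrib, Finset.sum_sub_distrib, ← Finset.sum_mul, ← Finset.mul_sum]
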